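/- arXiv:1008.4349 — 2 statements merged into one kernel-verified Lean document; each statement's English description precedes it below -/
import Mathlib

section
/- Let X be a compact metric space, r : X → X a Borel measurable, onto, finite-to-one map, μ a strongly invariant Borel probability measure with respect to which r is ergodic, and m0 ∈ L∞(X) a non-singular QMF filter with |m0| not μ-a.e. equal to 1 and log|m0|² ∈ L¹(X,μ). Let (X_∞, μ_∞) be the solenoid with the path-space measure built from the transition weights W(x) = |m0(x)|²/#r⁻¹(r(x)), and r_∞ the shift automorphism on X_∞. Then r_∞ is NOT ergodic with respect to μ_∞: there exists a measurable set A ⊆ X_∞ with r_∞⁻¹(A) = A up to μ_∞-null sets and 0 < μ_∞(A) < μ_∞(X_∞). -/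
open MeasureTheory Filter

noncomputable section

/-- A complex-valued function is "in `L∞`" if it is measurable and (everywhere) bounded. -/
def BddMeasC {X : Type*} [MeasurableSpace X] (f : X → ℂ) : Prop :=
  Measurable f ∧ ∃ C, ∀ x, ‖f x‖ ≤ C

/-- `μ` is strongly invariant for `r`:
`∫ f dμ = ∫ (1/#r⁻¹(x)) Σ_{r(y)=x} f(y) dμ(x)` for all bounded measurable `f`. -/
def StronglyInvariant {X : Type*} [MeasurableSpace X] (r : X → X) (μ : Measure X) : Prop :=
  ∀ f : X → ℝ, Measurable f → (∃ C, ∀ x, |f x| ≤ C) →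
    ∫ x, f x ∂μ =
      ∫ x, (Nat.card (r ⁻¹' {x}) : ℝ)⁻¹ * ∑' y : (r ⁻¹' {x}), f (y : X) ∂μ

/-- `m0` is a quadrature mirror filter: `(1/#r⁻¹(x)) Σ_{r(y)=x} |m0(y)|² = 1` for μ-a.e. `x`. -/
def IsQMF {X : Type*} [MeasurableSpace X] (r : X → X) (μ : Measure X) (m0 : X → ℂ) : Prop :=
  ∀ᵐ x ∂μ, (Nat.card (r ⁻¹' {x}) : ℝ)⁻¹ * ∑' y : (r ⁻¹' {x}), ‖m0 (y : X)‖ ^ 2 = 1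


/-- The solenoid of `r`: the set of backward orbits `(x₀, x₁, …)` with `r(x_{n+1}) = x_n`. -/
def Solenoid {X : Type*} (r : X → X) : Set (ℕ → X) :=
  {z | ∀ n : ℕ, r (z (n + 1)) = z n}

/-- The shift automorphism `r_∞(x₀, x₁, …) = (r(x₀), x₀, x₁, …)` on the solenoid. -/
def rInf {X : Type*} (r : X → X) (z : Solenoid r) : Solenoid r :=
  ⟨fun n => Nat.casesOn n (r (z.1 0)) z.1, by
    intro n
    cases n with
    | zero => rfl
    | succ m => exact z.2 m⟩

/-- `ν` is the path-space measure on the solenoid built from the transition weights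
`W(x) = |m0(x)|²/#r⁻¹(r(x))`: for every cylinder function `g` of the first `n+1` coordinates,
`∫ g dν = ∫_X Σ_{paths (x, z₁, …, z_n) starting at x} W(z₁)⋯W(z_n) g(x, z₁, …, z_n) dμ(x)`,
i.e. `∫ g dν = ∫_X ∫_{Ω_x} g dP_x dμ(x)` with `P_x` the path measures. -/
def IsPathMeasure {X : Type*} [MeasurableSpace X] (r : X → X) (μ : Measure X) (m0 : X → ℂ)
    (ν : Measure (Solenoid r)) : Prop :=
  ∀ (n : ℕ) (g : (Fin (n + 1) → X) → ℝ), Measurable g → (∃ C, ∀ v, |g v| ≤ C) →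
    ∫ z, g (fun i => z.1 (i : ℕ)) ∂ν =
      ∫ x, ∑' q : {q : Fin (n + 1) → X //
            q 0 = x ∧ ∀ i : Fin n, r (q i.succ) = q i.castSucc},
          (∏ i : Fin n,
            ‖m0 (q.1 i.succ)‖ ^ 2 / (Nat.card (r ⁻¹' {r (q.1 i.succ)}) : ℝ)) * g q.1 ∂μ

/-! Under `ν` the coordinate `xₙ` has density `∏_{k < n} |m0 ∘ r^k|²` with respect to `μ`. The QMF
condition gives `∫ |m0|² = μ(X)`, so `|m0|² ≤ exp (2 (|m0| - 1))` with `∫ (|m0| - 1) < 0`, and by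
the maximal ergodic lemma these densities are almost everywhere summable in `n`. Hence the shift is
transient: some set `B` is visited with positive probability and almost surely only finitely often.
The point of the last visit to `B` is a function invariant under the shift; if the shift were
ergodic it would be constant, and `μ` would have an atom. Strong invariance and ergodicity of `r`
then make almost every fibre a single point, where the QMF condition reads `|m0| = 1`. -/

section BirkhoffSum

variable {X : Type*} {r : X → X} {g : X → ℝ}

lemma partialSups_birkhoffSum_add_one (r : X → X) (g : X → ℝ) (n : ℕ) (x : X) :
    partialSups (birkhoffSum r g) (n + 1) x =
      max 0 (g x + partialSups (birkhoffSum r g) n (r x)) := by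
  induction n with
  | zero =>
    rw [partialSups_add_one, Pi.sup_apply]
    simp
  | succ n ih =>
    rw [partialSups_add_one, Pi.sup_apply, ih, birkhoffSum_succ', partialSups_add_one,
      Pi.sup_apply, ← max_add_add_left, max_assoc]

lemma bddAbove_range_birkhoffSum_apply_iff (r : X → X) (g : X → ℝ) (x : X) :
    BddAbove (Set.range fun n => birkhoffSum r g n (r x)) ↔
      BddAbove (Set.range fun n => birkhoffSum r g n x) := by
  simp only [bddAbove_def, Set.forall_mem_range]
  constructor
  · rintro ⟨C, hC⟩
    refine ⟨max 0 (g x + C), fun n => ?_⟩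
    cases n with
    | zero => simp
    | succ n =>
      rw [birkhoffSum_succ']
      exact le_max_of_le_right (by gcongr; exact hC n)
  · rintro ⟨C, hC⟩
    refine ⟨C - g x, fun n => ?_⟩
    have := hC (n + 1)
    rw [birkhoffSum_succ'] at this
    linarith

variable [MeasurableSpace X] {μ : Measure X}

lemma integrable_birkhoffSum (hr : MeasurePreserving r μ μ) (hg : Integrable g μ) (n : ℕ) :
    Integrable (birkhoffSum r g n) μ :=
  integrable_finsetSum _ fun k _ => (hr.iterate k).integrable_comp_of_integrable hg

lemma integrable_partialSups_birkhoffSum (hr : MeasurePreserving r μ μ) (hg : Integrable g μ)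
    (n : ℕ) : Integrable (partialSups (birkhoffSum r g) n) μ := by
  induction n with
  | zero => simpa only [partialSups_zero] using integrable_birkhoffSum hr hg 0
  | succ n ih =>
    rw [partialSups_add_one]
    exact ih.sup (integrable_birkhoffSum hr hg (n + 1))

lemma integral_max_neg_partialSups_birkhoffSum_nonneg (hr : MeasurePreserving r μ μ)
    (hg : Integrable g μ) (n : ℕ) :
    0 ≤ ∫ x, max (-partialSups (birkhoffSum r g) n (r x)) (g x) ∂μ := by
  set M := partialSups (birkhoffSum r g)
  have hM := integrable_partialSups_birkhoffSum hr hg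
  have hMr : Integrable (fun x => M n (r x)) μ := hr.integrable_comp_of_integrable (hM n)
  have hshift : ∫ x, M n (r x) ∂μ = ∫ x, M n x ∂μ := by
    have := integral_map (f := M n) hr.aemeasurable (hr.map_eq.symm ▸ (hM n).aestronglyMeasurable)
    rwa [hr.map_eq, eq_comm] at this
  calc
    0 ≤ ∫ x, M (n + 1) x ∂μ - ∫ x, M n x ∂μ :=
      sub_nonneg.2 <| integral_mono (hM n) (hM (n + 1)) (M.monotone n.le_succ)
    _ = ∫ x, (M (n + 1) x - M n (r x)) ∂μ := by rw [integral_sub (hM _) hMr, hshift]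
    _ = ∫ x, max (-M n (r x)) (g x) ∂μ := by
      congr with x
      rw [partialSups_birkhoffSum_add_one, ← max_sub_sub_right, zero_sub, add_sub_cancel_right]

lemma integral_nonneg_of_ae_not_bddAbove_birkhoffSum (hr : MeasurePreserving r μ μ)
    (hg : Integrable g μ)
    (hunbdd : ∀ᵐ x ∂μ, ¬BddAbove (Set.range fun n => birkhoffSum r g n x)) :
    0 ≤ ∫ x, g x ∂μ := by
  set M := partialSups (birkhoffSum r g)
  have hM_nonneg (n : ℕ) (x : X) : 0 ≤ M n x := by
    simpa using le_partialSups_of_le (birkhoffSum r g) n.zero_le x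
  have hlim : Tendsto (fun n => ∫ x, max (-M n (r x)) (g x) ∂μ) atTop (nhds (∫ x, g x ∂μ)) := by
    refine tendsto_integral_of_dominated_convergence (fun x => |g x|) (fun n => ?_) hg.abs
      (fun n => .of_forall fun x => ?_) ?_
    · exact ((hr.integrable_comp_of_integrable
        (integrable_partialSups_birkhoffSum hr hg n)).neg.sup hg).aestronglyMeasurable
    · rw [Real.norm_eq_abs, abs_le]
      exact ⟨le_max_of_le_right (neg_abs_le _),
        max_le ((neg_nonpos.2 (hM_nonneg n _)).trans (abs_nonneg _)) (le_abs_self _)⟩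
    · filter_upwards [hunbdd] with x hx
      rw [← bddAbove_range_birkhoffSum_apply_iff, not_bddAbove_iff] at hx
      obtain ⟨_, ⟨N, rfl⟩, hN⟩ := hx (-g x)
      refine tendsto_const_nhds.congr' ?_
      filter_upwards [eventually_ge_atTop N] with n hn
      have hMn : birkhoffSum r g N (r x) ≤ M n (r x) :=
        le_partialSups_of_le (birkhoffSum r g) hn (r x)
      exact (max_eq_right (by linarith)).symm
  exact ge_of_tendsto' hlim (integral_max_neg_partialSups_birkhoffSum_nonneg hr hg)

lemma nullMeasurableSet_bddAbove_birkhoffSum (hr : MeasurePreserving r μ μ)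
    (hg : Integrable g μ) :
    NullMeasurableSet {x | BddAbove (Set.range fun n => birkhoffSum r g n x)} μ := by
  have hset : {x | BddAbove (Set.range fun n => birkhoffSum r g n x)} =
      ⋃ C : ℕ, ⋂ n, {x | birkhoffSum r g n x ≤ C} := by
    ext x
    simp only [bddAbove_def, Set.forall_mem_range, Set.mem_ofPred_eq, Set.mem_iUnion,
      Set.mem_iInter]
    refine ⟨fun ⟨C, hC⟩ => ?_, fun ⟨C, hC⟩ => ⟨C, hC⟩⟩
    obtain ⟨N, hN⟩ := exists_nat_ge C
    exact ⟨N, fun n => (hC n).trans hN⟩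
  rw [hset]
  exact .iUnion fun C => .iInter fun n =>
    nullMeasurableSet_le (integrable_birkhoffSum hr hg n).aemeasurable aemeasurable_const

theorem ae_bddAbove_birkhoffSum_of_integral_neg (hr : Ergodic r μ) (hg : Integrable g μ)
    (hneg : ∫ x, g x ∂μ < 0) :
    ∀ᵐ x ∂μ, BddAbove (Set.range fun n => birkhoffSum r g n x) := by
  have hmp := hr.toMeasurePreserving
  refine (hr.quasiErgodic.ae_mem_or_ae_notMem₀ (nullMeasurableSet_bddAbove_birkhoffSum hmp hg)
    (.of_eq ?_)).resolve_right fun h => ?_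
  · ext x
    exact bddAbove_range_birkhoffSum_apply_iff r g x
  · exact hneg.not_ge (integral_nonneg_of_ae_not_bddAbove_birkhoffSum hmp hg h)

end BirkhoffSum

section BirkhoffProd

variable {X : Type*} {r : X → X} {w : X → ℝ} {C : ℝ}

/-- The product `∏_{k < n} w (r^k x)`, the multiplicative analogue of `birkhoffSum`. -/
def birkhoffProd (r : X → X) (w : X → ℝ) (n : ℕ) (x : X) : ℝ :=
  ∏ k ∈ Finset.range n, w (r^[k] x)

lemma birkhoffProd_zero (r : X → X) (w : X → ℝ) (x : X) : birkhoffProd r w 0 x = 1 :=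
  Finset.prod_range_zero _

lemma birkhoffProd_add_one (r : X → X) (w : X → ℝ) (n : ℕ) (x : X) :
    birkhoffProd r w (n + 1) x = birkhoffProd r w n x * w (r^[n] x) :=
  Finset.prod_range_succ _ _

lemma birkhoffProd_nonneg (hw : ∀ x, 0 ≤ w x) (n : ℕ) (x : X) : 0 ≤ birkhoffProd r w n x :=
  Finset.prod_nonneg fun _ _ => hw _

lemma birkhoffProd_le_pow (hw : ∀ x, 0 ≤ w x) (hC : ∀ x, w x ≤ C) (n : ℕ) (x : X) :
    birkhoffProd r w n x ≤ C ^ n := by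
  simpa only [birkhoffProd, Finset.prod_const, Finset.card_range] using
    Finset.prod_le_prod (s := Finset.range n) (fun k _ => hw (r^[k] x)) fun k _ => hC (r^[k] x)

lemma measurable_birkhoffProd [MeasurableSpace X] (hr : Measurable r) (hw : Measurable w) (n : ℕ) :
    Measurable (birkhoffProd r w n) :=
  Finset.measurable_prod _ fun k _ => hw.comp (hr.iterate k)

lemma birkhoffProd_le_exp_birkhoffSum {g : X → ℝ} (hw : ∀ x, 0 ≤ w x)
    (hle : ∀ x, w x ≤ Real.exp (g x)) (n : ℕ) (x : X) :
    birkhoffProd r w n x ≤ Real.exp (birkhoffSum r g n x) := by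
  rw [birkhoffSum, Real.exp_sum]
  exact Finset.prod_le_prod (fun _ _ => hw _) fun _ _ => hle _

theorem ae_summable_birkhoffProd [MeasurableSpace X] {μ : Measure X} [IsFiniteMeasure μ]
    {g : X → ℝ} (hr : Ergodic r μ) (hw : ∀ x, 0 ≤ w x) (hle : ∀ x, w x ≤ Real.exp (g x))
    (hg : Integrable g μ) (hneg : ∫ x, g x ∂μ < 0) :
    ∀ᵐ x ∂μ, Summable fun n => birkhoffProd r w n x := by
  obtain ⟨ε, hε, hneg'⟩ : ∃ ε > 0, ∫ x, (g x + ε) ∂μ < 0 := by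
    have hμ := measureReal_nonneg (μ := μ) (s := Set.univ)
    refine ⟨-(∫ x, g x ∂μ) / (μ.real Set.univ + 1), div_pos (neg_pos.2 hneg) (by linarith), ?_⟩
    rw [integral_add hg (integrable_const _), integral_const, smul_eq_mul]
    field_simp
    linarith
  have hbdd := ae_bddAbove_birkhoffSum_of_integral_neg hr (hg.add (integrable_const ε)) hneg'
  filter_upwards [hbdd] with x ⟨C, hC⟩
  have hgeom : Summable fun n : ℕ => Real.exp C * Real.exp (-ε) ^ n :=
    (summable_geometric_of_lt_one (Real.exp_nonneg _) (by simpa using hε)).mul_left _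
  refine hgeom.of_nonneg_of_le (fun n => birkhoffProd_nonneg hw n x) fun n => ?_
  have hsum : birkhoffSum r g n x + n * ε ≤ C := by
    simpa [birkhoffSum, Finset.sum_add_distrib] using hC ⟨n, rfl⟩
  calc
    birkhoffProd r w n x ≤ Real.exp (birkhoffSum r g n x) :=
      birkhoffProd_le_exp_birkhoffSum hw hle n x
    _ ≤ Real.exp (C + n * -ε) := by gcongr; linarith
    _ = Real.exp C * Real.exp (-ε) ^ n := by rw [Real.exp_add, Real.exp_nat_mul]

end BirkhoffProd

section FiberAverage

variable {X : Type*} {r : X → X} {f g : X → ℝ} {x : X} {C : ℝ}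

/-- The average of `f` over the fibre `r⁻¹(x)`. For a strongly invariant measure it is the
conditional expectation of `f` given `r`, read as a function on the target of `r`. -/
def fiberAvg (r : X → X) (f : X → ℝ) (x : X) : ℝ :=
  (Nat.card (r ⁻¹' {x}) : ℝ)⁻¹ * ∑' y : (r ⁻¹' {x}), f (y : X)

lemma natCard_fiber_pos (hx : (r ⁻¹' {x}).Finite) (hne : (r ⁻¹' {x}).Nonempty) :
    0 < Nat.card (r ⁻¹' {x}) :=
  Nat.card_pos_iff.2 ⟨hne.to_subtype, hx.to_subtype⟩

lemma fiberAvg_congr (h : ∀ y, r y = x → f y = g y) : fiberAvg r f x = fiberAvg r g x := by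
  unfold fiberAvg
  congr 1
  exact tsum_congr fun y => h y y.2

lemma fiberAvg_mono (hx : (r ⁻¹' {x}).Finite) (h : ∀ y, r y = x → f y ≤ g y) :
    fiberAvg r f x ≤ fiberAvg r g x := by
  have := hx.to_subtype
  have hsum : ∑' y : r ⁻¹' {x}, f y ≤ ∑' y : r ⁻¹' {x}, g y :=
    Summable.of_finite.tsum_le_tsum (fun y => h y y.2) .of_finite
  unfold fiberAvg
  gcongr

lemma fiberAvg_const (hx : (r ⁻¹' {x}).Finite) (hne : (r ⁻¹' {x}).Nonempty) (c : ℝ) :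
    fiberAvg r (fun _ => c) x = c := by
  have hcard : (Nat.card (r ⁻¹' {x}) : ℝ) ≠ 0 := by
    exact_mod_cast (natCard_fiber_pos hx hne).ne'
  rw [fiberAvg, tsum_const, nsmul_eq_mul, inv_mul_cancel_left₀ hcard]

lemma fiberAvg_add (hx : (r ⁻¹' {x}).Finite) :
    fiberAvg r (fun y => f y + g y) x = fiberAvg r f x + fiberAvg r g x := by
  have := hx.to_subtype
  rw [fiberAvg, Summable.of_finite.tsum_add .of_finite, mul_add, fiberAvg, fiberAvg]

lemma fiberAvg_mul_comp (f u : X → ℝ) :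
    fiberAvg r (fun y => f y * u (r y)) x = fiberAvg r f x * u x := by
  rw [fiberAvg_congr (g := fun y => f y * u x) fun y hy => by rw [hy], fiberAvg, fiberAvg,
    tsum_mul_right, mul_assoc]

lemma iterate_fiberAvg_mul_comp_iterate (f u : X → ℝ) (n : ℕ) :
    (fiberAvg r)^[n] (fun y => f y * u (r^[n] y)) = fun x => (fiberAvg r)^[n] f x * u x := by
  induction n generalizing f with
  | zero => rfl
  | succ n ih =>
    have hstep : fiberAvg r (fun y => f y * u (r^[n + 1] y)) =
        fun x => fiberAvg r f x * u (r^[n] x) := by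
      ext x
      exact fiberAvg_mul_comp f fun x => u (r^[n] x)
    rw [Function.iterate_succ_apply, hstep, ih, Function.iterate_succ_apply]

lemma abs_fiberAvg_le (hx : (r ⁻¹' {x}).Finite) (hne : (r ⁻¹' {x}).Nonempty)
    (hf : ∀ y, |f y| ≤ C) : |fiberAvg r f x| ≤ C := by
  refine abs_le.2 ⟨?_, ?_⟩
  · rw [← fiberAvg_const hx hne (-C)]
    exact fiberAvg_mono hx fun y _ => (abs_le.1 (hf y)).1
  · conv_rhs => rw [← fiberAvg_const hx hne C]
    exact fiberAvg_mono hx fun y _ => (abs_le.1 (hf y)).2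

lemma fiberAvg_apply_of_natCard_eq_one (h : Nat.card (r ⁻¹' {r x}) = 1) :
    fiberAvg r f (r x) = f x := by
  have := (Nat.card_eq_one_iff_unique.1 h).1
  rw [fiberAvg, h, tsum_eq_single ⟨x, rfl⟩ fun y hy => (hy (Subsingleton.elim y _)).elim]
  simp

lemma fiberAvg_indicator_singleton (r : X → X) (x : X) :
    fiberAvg r (Set.indicator {x} 1) =
      Set.indicator {r x} fun _ => (Nat.card (r ⁻¹' {r x}) : ℝ)⁻¹ := by
  ext z
  by_cases hz : z = r x
  · subst hz
    have hsum : ∑' y : r ⁻¹' {r x}, Set.indicator {x} (1 : X → ℝ) y = 1 := by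
      rw [tsum_eq_single (⟨x, rfl⟩ : r ⁻¹' {r x})]
      · simp
      · exact fun y hy => Set.indicator_of_notMem (s := {x}) (fun hyx => hy (Subtype.ext hyx)) _
    simp [fiberAvg, hsum]
  · have hzero : fiberAvg r (Set.indicator {x} 1) z = fiberAvg r (fun _ => 0) z :=
      fiberAvg_congr fun y hy =>
        Set.indicator_of_notMem (fun hyx => hz (by rw [← hy, Set.mem_singleton_iff.1 hyx])) _
    rw [hzero, Set.indicator_of_notMem (by simpa using hz)]
    simp [fiberAvg]

end FiberAverage

namespace StronglyInvariant

variable {X : Type*} [MeasurableSpace X] {r : X → X} {μ : Measure X} {f g : X → ℝ} {C : ℝ}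

lemma integrable_fiberAvg [IsFiniteMeasure μ] (hinv : StronglyInvariant r μ)
    (hsurj : Function.Surjective r) (hfin : ∀ x : X, (r ⁻¹' {x}).Finite)
    (hf : Measurable f) (hC : ∀ x, |f x| ≤ C) : Integrable (fiberAvg r f) μ := by
  have hf_int : Integrable f μ := .of_bound hf.aestronglyMeasurable C (.of_forall hC)
  -- A function with nonzero Bochner integral is integrable, and `f + (C + 1) ≥ 1` has one.
  have hshift : Integrable (fiberAvg r fun x => f x + (C + 1)) μ := by
    by_contra hnot
    have : NeZero μ := ⟨by rintro rfl; exact hnot integrable_zero_measure⟩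
    have hμ : 0 < μ.real Set.univ := measureReal_univ_pos
    have hone_le : ∫ _, (1 : ℝ) ∂μ ≤ ∫ x, f x + (C + 1) ∂μ :=
      integral_mono (integrable_const _) (hf_int.add (integrable_const _)) fun x => by
        have := (abs_le.1 (hC x)).1
        dsimp only
        linarith
    have hzero : ∫ x, f x + (C + 1) ∂μ = 0 :=
      (hinv _ (hf.add_const _) ⟨C + |C + 1|, fun x =>
        (abs_add_le _ _).trans (by gcongr; exact hC x)⟩).trans (integral_undef hnot)
    rw [integral_const, smul_eq_mul, mul_one] at hone_le
    linarith
  refine (hshift.sub (integrable_const (C + 1))).congr (.of_forall fun x => ?_)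
  simp only [Pi.sub_apply]
  rw [fiberAvg_add (hfin x), fiberAvg_const (hfin x) (hsurj x), add_sub_cancel_right]

lemma ae_forall_fiber [IsFiniteMeasure μ] (hinv : StronglyInvariant r μ)
    (hsurj : Function.Surjective r) (hfin : ∀ x : X, (r ⁻¹' {x}).Finite)
    {p : X → Prop} (hp : ∀ᵐ x ∂μ, p x) : ∀ᵐ x ∂μ, ∀ y, r y = x → p y := by
  obtain ⟨N, hpN, hN, hμN⟩ := exists_measurable_superset_of_null (ae_iff.1 hp)
  have h_nonneg (y : X) : 0 ≤ N.indicator (1 : X → ℝ) y :=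
    Set.indicator_nonneg (fun _ _ => zero_le_one) y
  have h_meas : Measurable (N.indicator (1 : X → ℝ)) := measurable_one.indicator hN
  have h_le (y : X) : |N.indicator (1 : X → ℝ) y| ≤ 1 := by
    rw [abs_of_nonneg (h_nonneg y)]
    exact Set.indicator_le_self' (fun _ _ => zero_le_one) y
  have havg_nonneg : 0 ≤ fiberAvg r (N.indicator 1) := fun x =>
    mul_nonneg (by positivity) (tsum_nonneg fun y => h_nonneg y)
  have havg_int : ∫ x, fiberAvg r (N.indicator 1) x ∂μ = 0 := by
    refine (hinv _ h_meas ⟨1, h_le⟩).symm.trans ?_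
    rw [integral_indicator_one hN, measureReal_def, hμN, ENNReal.toReal_zero]
  have havg_ae := (integral_eq_zero_iff_of_nonneg havg_nonneg
    (hinv.integrable_fiberAvg hsurj hfin h_meas h_le)).1 havg_int
  filter_upwards [havg_ae] with x hx y hy
  by_contra hpy
  have := (hfin x).to_subtype
  have hcard : (Nat.card (r ⁻¹' {x}) : ℝ)⁻¹ ≠ 0 :=
    inv_ne_zero (by exact_mod_cast (natCard_fiber_pos (hfin x) ⟨y, hy⟩).ne')
  have hsum := (mul_eq_zero.1 hx).resolve_left hcard
  have hy_zero := congrFun ((hasSum_zero_iff_of_nonneg fun y => h_nonneg _).1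
    (hsum ▸ Summable.of_finite.hasSum)) (⟨y, hy⟩ : r ⁻¹' {x})
  simp [hpN hpy] at hy_zero

lemma fiberAvg_ae_eq [IsFiniteMeasure μ] (hinv : StronglyInvariant r μ)
    (hsurj : Function.Surjective r) (hfin : ∀ x : X, (r ⁻¹' {x}).Finite) (h : f =ᵐ[μ] g) :
    fiberAvg r f =ᵐ[μ] fiberAvg r g :=
  (hinv.ae_forall_fiber hsurj hfin h).mono fun _ hx => fiberAvg_congr hx

/-- The version of strong invariance for a.e. measurable functions, which unlike the measurable ones
are stable under `fiberAvg`. -/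
lemma aemeasurable_fiberAvg_and_integral_eq [IsFiniteMeasure μ] (hinv : StronglyInvariant r μ)
    (hsurj : Function.Surjective r) (hfin : ∀ x : X, (r ⁻¹' {x}).Finite)
    (hf : AEMeasurable f μ) (hC : ∀ x, |f x| ≤ C) :
    AEMeasurable (fiberAvg r f) μ ∧ ∫ x, fiberAvg r f x ∂μ = ∫ x, f x ∂μ := by
  rcases isEmpty_or_nonempty X with hX | ⟨⟨x₀⟩⟩
  · exact ⟨(measurable_of_empty _).aemeasurable, by simp [Measure.eq_zero_of_isEmpty μ]⟩
  obtain ⟨f', hf', hrange, hff'⟩ := hf.exists_ae_eq_range_subset (t := Set.Icc (-C) C)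
    (.of_forall fun x => abs_le.1 (hC x)) ⟨f x₀, abs_le.1 (hC x₀)⟩
  have hC' (x : X) : |f' x| ≤ C := abs_le.2 (hrange ⟨x, rfl⟩)
  have havg := hinv.fiberAvg_ae_eq hsurj hfin hff'
  refine ⟨(hinv.integrable_fiberAvg hsurj hfin hf' hC').aemeasurable.congr havg.symm, ?_⟩
  rw [integral_congr_ae havg, integral_congr_ae hff']
  exact (hinv f' hf' ⟨C, hC'⟩).symm

lemma integral_iterate_fiberAvg [IsFiniteMeasure μ] (hinv : StronglyInvariant r μ)
    (hsurj : Function.Surjective r) (hfin : ∀ x : X, (r ⁻¹' {x}).Finite)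
    (hf : AEMeasurable f μ) (hC : ∀ x, |f x| ≤ C) (n : ℕ) :
    ∫ x, (fiberAvg r)^[n] f x ∂μ = ∫ x, f x ∂μ := by
  induction n generalizing f with
  | zero => rfl
  | succ n ih =>
    obtain ⟨hmeas, hint⟩ := hinv.aemeasurable_fiberAvg_and_integral_eq hsurj hfin hf hC
    rw [Function.iterate_succ_apply,
      ih hmeas fun x => abs_fiberAvg_le (hfin x) (hsurj x) hC, hint]

lemma measureReal_singleton_apply [MeasurableSingletonClass X] (hinv : StronglyInvariant r μ)
    {x : X} (hx : (r ⁻¹' {r x}).Finite) :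
    μ.real {r x} = Nat.card (r ⁻¹' {r x}) * μ.real {x} := by
  have hcard : (Nat.card (r ⁻¹' {r x}) : ℝ) ≠ 0 := by
    exact_mod_cast (natCard_fiber_pos hx ⟨x, rfl⟩).ne'
  have hle (y : X) : |Set.indicator {x} (1 : X → ℝ) y| ≤ 1 := by
    by_cases h : y = x <;> simp [h]
  have hint : ∫ y, Set.indicator {x} 1 y ∂μ = ∫ y, fiberAvg r (Set.indicator {x} 1) y ∂μ :=
    hinv _ (measurable_one.indicator (measurableSet_singleton x)) ⟨1, hle⟩
  rw [fiberAvg_indicator_singleton, integral_indicator_one (measurableSet_singleton x),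
    integral_indicator_const _ (measurableSet_singleton _), smul_eq_mul] at hint
  rw [hint, mul_comm, inv_mul_cancel_right₀ hcard]

lemma measureReal_singleton_le [MeasurableSingletonClass X]
    (hinv : StronglyInvariant r μ) {x : X} (hx : (r ⁻¹' {r x}).Finite) :
    μ.real {x} ≤ μ.real {r x} := by
  rw [hinv.measureReal_singleton_apply hx]
  exact le_mul_of_one_le_left measureReal_nonneg
    (by exact_mod_cast natCard_fiber_pos hx ⟨x, rfl⟩)

/-- Along an orbit the mass of points does not decrease, so by ergodicity one atom forces almost
every point to have the same mass. -/
lemma ae_measureReal_singleton_eq [IsFiniteMeasure μ] [MeasurableSingletonClass X]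
    (hinv : StronglyInvariant r μ) (hfin : ∀ x : X, (r ⁻¹' {x}).Finite) (herg : Ergodic r μ)
    {a : X} (ha : μ {a} ≠ 0) : ∀ᵐ x ∂μ, μ.real {x} = μ.real {a} := by
  have ha_pos : 0 < μ.real {a} := ENNReal.toReal_pos ha (measure_ne_top μ _)
  have hcount : {x | 0 < μ {x}}.Countable :=
    Measure.countable_meas_pos_of_disjoint_iUnion (As := fun x : X => {x})
      (fun x => measurableSet_singleton x) fun x y hxy => by simpa using hxy
  have hdich (S : Set X) (hpos : ∀ x ∈ S, 0 < μ.real {x}) (hS : ∀ x ∈ S, r x ∈ S) :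
      (∀ᵐ x ∂μ, x ∉ S) ∨ ∀ᵐ x ∂μ, x ∈ S := by
    have hmeas : MeasurableSet S :=
      (hcount.mono fun x hx => (ENNReal.toReal_pos_iff.1 (hpos x hx)).1).measurableSet
    exact (herg.ae_empty_or_univ_of_ae_le_preimage hmeas.nullMeasurableSet (.of_forall hS)).imp
      eventuallyEq_empty.1 eventuallyEq_univ.1
  have hmem_of_ae {p : X → Prop} (hp : ∀ᵐ x ∂μ, p x) : p a := by
    by_contra hpa
    exact ha (measure_mono_null (by simpa using hpa) (ae_iff.1 hp))
  have hge : ∀ᵐ x ∂μ, μ.real {a} ≤ μ.real {x} :=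
    (hdich {x | μ.real {a} ≤ μ.real {x}} (fun x hx => ha_pos.trans_le hx)
      fun x hx => le_trans hx (hinv.measureReal_singleton_le (hfin _))).resolve_left
      fun h => hmem_of_ae (p := fun x => ¬μ.real {a} ≤ μ.real {x}) h le_rfl
  have hle : ∀ᵐ x ∂μ, ¬μ.real {a} < μ.real {x} :=
    (hdich {x | μ.real {a} < μ.real {x}} (fun x hx => ha_pos.trans hx)
      fun x hx => lt_of_lt_of_le hx (hinv.measureReal_singleton_le (hfin _))).resolve_right
      fun h => (hmem_of_ae (p := fun x => μ.real {a} < μ.real {x}) h).false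
  filter_upwards [hge, hle] with x h₁ h₂ using le_antisymm (not_lt.1 h₂) h₁

lemma ae_natCard_fiber_eq_one [IsFiniteMeasure μ] [MeasurableSingletonClass X]
    (hinv : StronglyInvariant r μ) (hfin : ∀ x : X, (r ⁻¹' {x}).Finite) (herg : Ergodic r μ)
    {a : X} (ha : μ {a} ≠ 0) : ∀ᵐ x ∂μ, Nat.card (r ⁻¹' {r x}) = 1 := by
  have ha_ne : μ.real {a} ≠ 0 := ENNReal.toReal_ne_zero.2 ⟨ha, measure_ne_top μ _⟩
  have hmass := hinv.ae_measureReal_singleton_eq hfin herg ha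
  filter_upwards [hmass, herg.quasiMeasurePreserving.ae hmass] with x hx hrx
  rw [hinv.measureReal_singleton_apply (hfin _), hx, mul_eq_right₀ ha_ne] at hrx
  exact_mod_cast hrx

end StronglyInvariant

section BackwardPath

variable {X : Type*} {r : X → X} {x : X} {n : ℕ}

/-- The backward paths `(q₀, …, qₙ)` of length `n` from `x`: `q₀ = x` and `r (qᵢ₊₁) = qᵢ`. This is
the index type of the sum in `IsPathMeasure`. -/
abbrev BackwardPath (r : X → X) (n : ℕ) (x : X) : Type _ :=
  {q : Fin (n + 1) → X // q 0 = x ∧ ∀ i : Fin n, r (q i.succ) = q i.castSucc}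

/-- Splitting off the first step identifies a path of length `n + 1` from `x` with a point `y` of
the fibre over `x` together with a path of length `n` from `y`. -/
def backwardPathEquivSigma (r : X → X) (n : ℕ) (x : X) :
    BackwardPath r (n + 1) x ≃ Σ y : r ⁻¹' {x}, BackwardPath r n (y : X) where
  toFun q :=
    ⟨⟨q.1 1, by simpa [q.2.1] using q.2.2 0⟩, fun i => q.1 i.succ, by simp,
      fun i => by simpa using q.2.2 i.succ⟩
  invFun p :=
    ⟨Fin.cons x p.2.1, by simp,
      Fin.cases ((congrArg r p.2.2.1).trans p.1.2) fun j => by simpa using p.2.2.2 j⟩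
  left_inv q := Subtype.ext <| funext <| Fin.cases (by simp [q.2.1]) fun j => by simp
  right_inv p := by
    obtain ⟨⟨y, hy⟩, q, hq₀ : q 0 = y, hq⟩ := p
    subst hq₀
    rfl

instance uniqueBackwardPathZero (r : X → X) (x : X) : Unique (BackwardPath r 0 x) where
  default := ⟨fun _ => x, rfl, fun i => i.elim0⟩
  uniq q := Subtype.ext <| funext <| Fin.cases q.2.1 fun i => i.elim0

lemma finite_backwardPath (hfin : ∀ x : X, (r ⁻¹' {x}).Finite) (n : ℕ) (x : X) :
    Finite (BackwardPath r n x) := by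
  induction n generalizing x with
  | zero => infer_instance
  | succ n ih =>
    have := (hfin x).to_subtype
    exact .of_equiv _ (backwardPathEquivSigma r n x).symm

lemma tsum_backwardPath_succ (hfin : ∀ x : X, (r ⁻¹' {x}).Finite)
    (F : (Fin (n + 2) → X) → ℝ) :
    ∑' q : BackwardPath r (n + 1) x, F q.1 =
      ∑' y : r ⁻¹' {x}, ∑' q : BackwardPath r n (y : X), F (Fin.cons x q.1) := by
  have := (hfin x).to_subtype
  have := fun y : X => finite_backwardPath hfin n y
  rw [← (backwardPathEquivSigma r n x).symm.tsum_eq]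
  exact Summable.of_finite.tsum_sigma' fun _ => .of_finite

/-- The weights of a backward path telescope into fibre averages of the forward product
`birkhoffProd r w n` at its endpoint. -/
lemma tsum_backwardPath_eq_iterate_fiberAvg (hfin : ∀ x : X, (r ⁻¹' {x}).Finite)
    (w h : X → ℝ) (n : ℕ) (x : X) :
    ∑' q : BackwardPath r n x,
        (∏ i : Fin n, w (q.1 i.succ) / (Nat.card (r ⁻¹' {r (q.1 i.succ)}) : ℝ)) *
          h (q.1 (Fin.last n)) =
      (fiberAvg r)^[n] (fun y => birkhoffProd r w n y * h y) x := by
  induction n generalizing x with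
  | zero => simp [birkhoffProd_zero, (default : BackwardPath r 0 x).2.1]
  | succ n ih =>
    have hprod : (fun y => birkhoffProd r w (n + 1) y * h y) =
        fun y => birkhoffProd r w n y * h y * w (r^[n] y) := by
      ext y
      rw [birkhoffProd_add_one, mul_right_comm]
    rw [hprod, Function.iterate_succ_apply', iterate_fiberAvg_mul_comp_iterate, fiberAvg,
      tsum_backwardPath_succ hfin fun q =>
        (∏ i : Fin (n + 1), w (q i.succ) / (Nat.card (r ⁻¹' {r (q i.succ)}) : ℝ)) *
          h (q (Fin.last (n + 1))), ← tsum_mul_left]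
    refine tsum_congr fun ⟨y, hy⟩ => ?_
    rw [← ih, mul_comm _ (w y), mul_left_comm, ← tsum_mul_left, ← tsum_mul_left]
    refine tsum_congr fun q => ?_
    rw [Fin.prod_univ_succ, ← Fin.succ_last]
    simp only [Fin.cons_succ, q.2.1, show r y = x from hy]
    ring

end BackwardPath

section LastVisit

variable {Ω X : Type*} {c : ℤ → Ω → X} {B U : Set X} {k : ℤ} {ω : Ω}

/-- The event that the process `c`, indexed by `ℤ`, visits `B` for the last time at time `k`. -/
def lastVisitAt (c : ℤ → Ω → X) (B : Set X) (k : ℤ) : Set Ω :=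
  {ω | c k ω ∈ B ∧ ∀ j, k < j → c j ω ∉ B}

/-- The event that the process `c` has a last visit to `B` and is in `U` at that time. A
transformation that translates time leaves it unchanged. -/
def lastVisitIn (c : ℤ → Ω → X) (B U : Set X) : Set Ω :=
  ⋃ k, lastVisitAt c B k ∩ c k ⁻¹' U

lemma mem_lastVisitIn_iff (hω : ω ∈ lastVisitAt c B k) : ω ∈ lastVisitIn c B U ↔ c k ω ∈ U := by
  refine ⟨fun h => ?_, fun h => Set.mem_iUnion.2 ⟨k, hω, h⟩⟩
  obtain ⟨j, hj, hjU⟩ := Set.mem_iUnion.1 h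
  rcases lt_trichotomy j k with hlt | rfl | hlt
  · exact absurd hω.1 (hj.2 k hlt)
  · exact hjU
  · exact absurd hj.1 (hω.2 j hlt)

lemma preimage_lastVisitIn {T : Ω → Ω} (hcT : ∀ k ω, c (k + 1) (T ω) = c k ω) (B U : Set X) :
    T ⁻¹' lastVisitIn c B U = lastVisitIn c B U := by
  have hat (k : ℤ) (ω : Ω) : T ω ∈ lastVisitAt c B (k + 1) ↔ ω ∈ lastVisitAt c B k := by
    refine and_congr (by rw [hcT]) ⟨fun h j hj => ?_, fun h j hj => ?_⟩
    · rw [← hcT]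
      exact h (j + 1) (by omega)
    · rw [← sub_add_cancel j 1, hcT]
      exact h (j - 1) (by omega)
  ext ω
  simp only [lastVisitIn, Set.mem_preimage, Set.mem_iUnion, Set.mem_inter_iff]
  rw [← (Equiv.addRight (1 : ℤ)).exists_congr_right]
  simp only [Equiv.coe_addRight, hat, hcT]

lemma exists_mem_lastVisitAt (hfin : ∀ᶠ n : ℕ in atTop, c n ω ∉ B) (hvisit : c k ω ∈ B) :
    ∃ j, ω ∈ lastVisitAt c B j := by
  obtain ⟨N, hN⟩ := eventually_atTop.1 hfin
  have hbdd (j : ℤ) (hj : c j ω ∈ B) : j ≤ N := by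
    by_contra! hNj
    lift j to ℕ using by omega
    exact hN j (by omega) hj
  obtain ⟨j, hj, hmax⟩ := Int.exists_greatest_of_bdd ⟨_, hbdd⟩ ⟨k, hvisit⟩
  exact ⟨j, hj, fun i hi hiB => (hmax i hiB).not_gt hi⟩

variable [MeasurableSpace Ω] [MeasurableSpace X] {ν : Measure Ω}

lemma measurableSet_lastVisitAt (hc : ∀ k, Measurable (c k)) (hB : MeasurableSet B) (k : ℤ) :
    MeasurableSet (lastVisitAt c B k) := by
  have : lastVisitAt c B k = c k ⁻¹' B ∩ ⋂ j, ⋂ _ : k < j, (c j ⁻¹' B)ᶜ := by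
    ext
    simp [lastVisitAt]
  rw [this]
  exact (hc k hB).inter (.iInter fun j => .iInter fun _ => (hc j hB).compl)

lemma measurableSet_lastVisitIn (hc : ∀ k, Measurable (c k)) (hB : MeasurableSet B)
    (hU : MeasurableSet U) : MeasurableSet (lastVisitIn c B U) :=
  .iUnion fun k => (measurableSet_lastVisitAt hc hB k).inter (hc k hU)

/-- A set `B` of positive finite mass for the sum of the laws is visited with positive probability,
and only finitely often by Borel–Cantelli. -/
lemma exists_measure_lastVisitAt_ne_zero [NeZero ν] (hc : ∀ k, Measurable (c k))
    [SigmaFinite (Measure.sum fun n : ℕ => ν.map (c n))] :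
    ∃ B k, MeasurableSet B ∧ ν (lastVisitAt c B k) ≠ 0 := by
  set Λ := Measure.sum fun n : ℕ => ν.map (c n)
  have hΛ : Λ ≠ 0 := fun h =>
    NeZero.ne ν ((Measure.map_eq_zero_iff (hc 0).aemeasurable).1 (Measure.sum_eq_zero.1 h 0))
  obtain ⟨B, hB, -, hB_pos, hB_fin⟩ :=
    Measure.exists_subset_measure_lt_top .univ (Measure.measure_univ_pos.2 hΛ)
  have hΛB : Λ B = ∑' n : ℕ, ν (c n ⁻¹' B) := by
    simp only [Λ, Measure.sum_apply _ hB, Measure.map_apply (hc _) hB]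
  obtain ⟨n, hn⟩ : ∃ n : ℕ, ν (c n ⁻¹' B) ≠ 0 := by
    by_contra! h
    simp [hΛB, h] at hB_pos
  refine ⟨B, ?_⟩
  by_contra! h
  refine hn (measure_mono_null_ae ?_ (measure_iUnion_null fun k => h k hB))
  filter_upwards [ae_eventually_notMem (hΛB ▸ hB_fin.ne)] with ω hω hvisit
  exact Set.mem_iUnion.2 (exists_mem_lastVisitAt hω hvisit)

theorem exists_measure_preimage_singleton_ne_zero_of_preErgodic [NeZero ν]
    [MeasurableSpace.CountablySeparated X] {T : Ω → Ω} (hT : PreErgodic T ν)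
    (hc : ∀ k, Measurable (c k)) (hcT : ∀ k ω, c (k + 1) (T ω) = c k ω)
    [SigmaFinite (Measure.sum fun n : ℕ => ν.map (c n))] :
    ∃ k a, ν (c k ⁻¹' {a}) ≠ 0 := by
  obtain ⟨B, k, hB, hE⟩ := exists_measure_lastVisitAt_ne_zero (ν := ν) hc
  have : Nonempty X := (Measure.nonempty_of_neZero ν).map (c 0)
  have hdich (U : Set X) (hU : MeasurableSet U) :
      (∀ᵐ ω ∂ν.restrict (lastVisitAt c B k), c k ω ∈ U) ∨
        ∀ᵐ ω ∂ν.restrict (lastVisitAt c B k), c k ω ∉ U := by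
    simp only [ae_restrict_iff' (measurableSet_lastVisitAt hc hB k)]
    refine (hT.ae_mem_or_ae_notMem (measurableSet_lastVisitIn hc hB hU)
      (preimage_lastVisitIn hcT B U)).imp ?_ ?_
    · exact fun h => h.mono fun ω hω hE => (mem_lastVisitIn_iff hE).1 hω
    · exact fun h => h.mono fun ω hω hE => mt (mem_lastVisitIn_iff hE).2 hω
  obtain ⟨a, ha⟩ := exists_eventuallyEq_const_of_forall_separating MeasurableSet hdich
  refine ⟨k, a, fun h => hE (measure_mono_null_ae ?_ h)⟩
  exact (ae_restrict_iff' (measurableSet_lastVisitAt hc hB k)).1 ha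

lemma exists_invariant_of_not_preErgodic {T : Ω → Ω} [IsFiniteMeasure ν] (hT : ¬PreErgodic T ν) :
    ∃ A, MeasurableSet A ∧ T ⁻¹' A = A ∧ 0 < ν A ∧ ν A < ν Set.univ := by
  by_contra! h
  refine hT ⟨fun A hA hTA => eventuallyConst_set'.2 ?_⟩
  refine (eq_or_ne (ν A) 0).imp ae_eq_empty.2 fun hpos => ?_
  exact ae_eq_of_subset_of_measure_ge A.subset_univ (h A hA hTA hpos.bot_lt)
    hA.nullMeasurableSet (measure_ne_top ν _)

end LastVisit

section SolenoidCoord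

variable {X : Type*} {r : X → X}

/-- The two-sided coordinates of the solenoid: `xₖ` for `k ≥ 0`, continued by `x₋ₖ = r^k x₀`, so
that `rInf` translates the index. -/
def solenoidCoord (r : X → X) : ℤ → Solenoid r → X
  | .ofNat n, z => z.1 n
  | .negSucc n, z => r^[n + 1] (z.1 0)

lemma solenoidCoord_add_one_rInf (r : X → X) (k : ℤ) (z : Solenoid r) :
    solenoidCoord r (k + 1) (rInf r z) = solenoidCoord r k z :=
  match k with
  | .ofNat _ | .negSucc 0 | .negSucc (_ + 1) => rfl

lemma measurable_solenoidCoord [MeasurableSpace X] (hr : Measurable r) (k : ℤ) :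
    Measurable (solenoidCoord r k) := by
  have hcoord (n : ℕ) : Measurable fun z : Solenoid r => z.1 n :=
    (measurable_pi_apply n).comp measurable_subtype_coe
  match k with
  | .ofNat n => exact hcoord n
  | .negSucc n => exact (hr.iterate (n + 1)).comp (hcoord 0)

end SolenoidCoord

section PathDensity

variable {X : Type*} {r : X → X} {m0 : X → ℂ}

/-- The product `∏_{k < n} |m0 (r^k x)|²`, which turns out to be the density with respect to `μ` of
the law of the coordinate `xₙ` of the solenoid (`IsPathMeasure.map_solenoidCoord`). -/
def pathDensity (r : X → X) (m0 : X → ℂ) (n : ℕ) (x : X) : ℝ :=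
  birkhoffProd r (fun y => ‖m0 y‖ ^ 2) n x

lemma pathDensity_nonneg (n : ℕ) (x : X) : 0 ≤ pathDensity r m0 n x :=
  birkhoffProd_nonneg (fun _ => by positivity) n x

variable [MeasurableSpace X]

lemma BddMeasC.measurable_pathDensity (hm0 : BddMeasC m0) (hr : Measurable r) (n : ℕ) :
    Measurable (pathDensity r m0 n) :=
  measurable_birkhoffProd hr (hm0.1.norm.pow_const 2) n

lemma BddMeasC.exists_abs_pathDensity_le (hm0 : BddMeasC m0) (r : X → X) (n : ℕ) :
    ∃ C, ∀ x, |pathDensity r m0 n x| ≤ C := by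
  obtain ⟨-, C, hC⟩ := hm0
  refine ⟨(C ^ 2) ^ n, fun x => ?_⟩
  rw [abs_of_nonneg (pathDensity_nonneg n x)]
  exact birkhoffProd_le_pow (fun _ => by positivity)
    (fun y => pow_le_pow_left₀ (norm_nonneg _) (hC y) 2) n x

lemma BddMeasC.integrable_pathDensity {μ : Measure X} [IsFiniteMeasure μ] (hm0 : BddMeasC m0)
    (hr : Measurable r) (n : ℕ) : Integrable (pathDensity r m0 n) μ :=
  have ⟨C, hC⟩ := hm0.exists_abs_pathDensity_le r n
  .of_bound (hm0.measurable_pathDensity hr n).aestronglyMeasurable C (.of_forall hC)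

end PathDensity

namespace IsPathMeasure

variable {X : Type*} [MeasurableSpace X] {r : X → X} {μ : Measure X} {m0 : X → ℂ}
  {ν : Measure (Solenoid r)}

lemma integral_comp_coord [IsFiniteMeasure μ] (hν : IsPathMeasure r μ m0 ν)
    (hinv : StronglyInvariant r μ) (hr : Measurable r) (hsurj : Function.Surjective r)
    (hfin : ∀ x : X, (r ⁻¹' {x}).Finite) (hm0 : BddMeasC m0) {h : X → ℝ} (hh : Measurable h)
    {K : ℝ} (hK : ∀ x, |h x| ≤ K) (n : ℕ) :
    ∫ z, h (z.1 n) ∂ν = ∫ x, pathDensity r m0 n x * h x ∂μ := by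
  obtain ⟨C, hC⟩ := hm0.exists_abs_pathDensity_le r n
  have hbound (x : X) : |pathDensity r m0 n x * h x| ≤ C * K := by
    rw [abs_mul]
    exact mul_le_mul (hC x) (hK x) (abs_nonneg _) ((abs_nonneg _).trans (hC x))
  calc
    ∫ z, h (z.1 n) ∂ν = ∫ x, (fiberAvg r)^[n] (fun y => pathDensity r m0 n y * h y) x ∂μ := by
      simp only [pathDensity, ← tsum_backwardPath_eq_iterate_fiberAvg hfin]
      exact hν n (fun q => h (q (Fin.last n))) (hh.comp (measurable_pi_apply _)) ⟨K, fun q => hK _⟩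
    _ = ∫ x, pathDensity r m0 n x * h x ∂μ :=
      hinv.integral_iterate_fiberAvg hsurj hfin
        ((hm0.measurable_pathDensity hr n).mul hh).aemeasurable hbound n

lemma measureReal_univ_eq (hν : IsPathMeasure r μ m0 ν) : ν.real Set.univ = μ.real Set.univ := by
  simpa using hν 0 (fun _ => 1) measurable_const ⟨1, by simp⟩

lemma isFiniteMeasure [NeZero μ] [IsFiniteMeasure μ] (hν : IsPathMeasure r μ m0 ν) :
    IsFiniteMeasure ν := by
  have hpos : 0 < ν.real Set.univ := hν.measureReal_univ_eq ▸ measureReal_univ_pos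
  exact ⟨(ENNReal.toReal_pos_iff.1 hpos).2⟩

lemma neZero [NeZero μ] [IsFiniteMeasure μ] (hν : IsPathMeasure r μ m0 ν) : NeZero ν := by
  have hpos : 0 < ν.real Set.univ := hν.measureReal_univ_eq ▸ measureReal_univ_pos
  exact ⟨by rintro rfl; simp at hpos⟩

lemma map_solenoidCoord [NeZero μ] [IsFiniteMeasure μ] (hν : IsPathMeasure r μ m0 ν)
    (hinv : StronglyInvariant r μ) (hr : Measurable r) (hsurj : Function.Surjective r)
    (hfin : ∀ x : X, (r ⁻¹' {x}).Finite) (hm0 : BddMeasC m0) (n : ℕ) :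
    ν.map (solenoidCoord r n) = μ.withDensity fun x => .ofReal (pathDensity r m0 n x) := by
  have := hν.isFiniteMeasure
  ext s hs
  have hcoord := measurable_solenoidCoord hr n
  have hle (x : X) : |s.indicator (1 : X → ℝ) x| ≤ 1 := by
    by_cases h : x ∈ s <;> simp [h]
  have hreal : ν.real (solenoidCoord r n ⁻¹' s) = ∫ x in s, pathDensity r m0 n x ∂μ := by
    rw [← integral_indicator_one (hcoord hs), ← integral_indicator hs]
    refine (hν.integral_comp_coord hinv hr hsurj hfin hm0 (measurable_one.indicator hs) hle n).trans
      (integral_congr_ae (.of_forall fun x => ?_))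
    by_cases h : x ∈ s <;> simp [h]
  rw [Measure.map_apply hcoord hs, withDensity_apply _ hs, ← ofReal_measureReal, hreal,
    ofReal_integral_eq_lintegral_ofReal (hm0.integrable_pathDensity hr n).integrableOn
      (.of_forall (pathDensity_nonneg n))]

lemma quasiMeasurePreserving_solenoidCoord [NeZero μ] [IsFiniteMeasure μ]
    (hν : IsPathMeasure r μ m0 ν) (hinv : StronglyInvariant r μ) (hsurj : Function.Surjective r)
    (hfin : ∀ x : X, (r ⁻¹' {x}).Finite) (hr : Measure.QuasiMeasurePreserving r μ μ)
    (hm0 : BddMeasC m0) (k : ℤ) :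
    Measure.QuasiMeasurePreserving (solenoidCoord r k) ν μ := by
  have hnat (n : ℕ) : Measure.QuasiMeasurePreserving (solenoidCoord r n) ν μ := by
    refine ⟨measurable_solenoidCoord hr.measurable n, ?_⟩
    rw [hν.map_solenoidCoord hinv hr.measurable hsurj hfin hm0 n]
    exact withDensity_absolutelyContinuous _ _
  match k with
  | .ofNat n => exact hnat n
  | .negSucc n => exact (hr.iterate (n + 1)).comp (hnat 0)

lemma sigmaFinite_sum_map_solenoidCoord [NeZero μ] [IsFiniteMeasure μ]
    (hν : IsPathMeasure r μ m0 ν) (hinv : StronglyInvariant r μ) (hr : Measurable r)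
    (hsurj : Function.Surjective r) (hfin : ∀ x : X, (r ⁻¹' {x}).Finite) (hm0 : BddMeasC m0)
    (hsum : ∀ᵐ x ∂μ, Summable fun n => pathDensity r m0 n x) :
    SigmaFinite (Measure.sum fun n : ℕ => ν.map (solenoidCoord r n)) := by
  simp only [hν.map_solenoidCoord hinv hr hsurj hfin hm0]
  rw [← withDensity_tsum fun n => (hm0.measurable_pathDensity hr n).ennreal_ofReal]
  refine .withDensity_of_ne_top (hsum.mono fun x hx => ?_)
  rw [tsum_apply (Pi.summable.2 fun _ => ENNReal.summable)]
  exact hx.tsum_ofReal_ne_top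

end IsPathMeasure

section QMF

variable {X : Type*} [MeasurableSpace X] {r : X → X} {μ : Measure X} {m0 : X → ℂ}

lemma integral_mul_sub_one_neg [IsFiniteMeasure μ] {u : X → ℝ} (hu : MemLp u 2 μ)
    (hnorm : ∫ x, u x ^ 2 ∂μ = μ.real Set.univ) (hne : ¬∀ᵐ x ∂μ, u x = 1) :
    ∫ x, 2 * (u x - 1) ∂μ < 0 := by
  have hu_int : Integrable (fun x => 2 * (u x - 1)) μ :=
    ((hu.integrable one_le_two).sub (integrable_const 1)).const_mul 2
  have hsq_int : Integrable (fun x => (u x - 1) ^ 2) μ := (hu.sub (memLp_const 1)).integrable_sq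
  have hsq_pos : 0 < ∫ x, (u x - 1) ^ 2 ∂μ := by
    refine (integral_nonneg fun x => sq_nonneg _).lt_of_ne' fun h => hne ?_
    filter_upwards [(integral_eq_zero_iff_of_nonneg (fun x => sq_nonneg _) hsq_int).1 h] with x hx
    exact sub_eq_zero.1 (sq_eq_zero_iff.1 hx)
  have hsum : ∫ x, 2 * (u x - 1) ∂μ + ∫ x, (u x - 1) ^ 2 ∂μ = 0 := by
    calc
      ∫ x, 2 * (u x - 1) ∂μ + ∫ x, (u x - 1) ^ 2 ∂μ = ∫ x, (u x ^ 2 - 1) ∂μ := by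
        rw [← integral_add hu_int hsq_int]
        congr with x
        ring
      _ = 0 := by
        rw [integral_sub hu.integrable_sq (integrable_const 1), hnorm]
        simp
  linarith

lemma IsQMF.integral_norm_sq (hqmf : IsQMF r μ m0) (hinv : StronglyInvariant r μ)
    (hm0 : BddMeasC m0) : ∫ x, ‖m0 x‖ ^ 2 ∂μ = μ.real Set.univ := by
  obtain ⟨hm0_meas, C, hC⟩ := hm0
  have hbdd (x : X) : |‖m0 x‖ ^ 2| ≤ C ^ 2 := by
    rw [abs_of_nonneg (by positivity)]
    gcongr
    exact hC x
  rw [hinv _ (hm0_meas.norm.pow_const 2) ⟨C ^ 2, hbdd⟩, integral_congr_ae hqmf]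
  simp

/-- As `∫ |m0|² = μ(X)`, the bound `|m0|² ≤ exp (2 (|m0| - 1))` has an exponent of negative mean
`-∫ (|m0| - 1)²`. -/
lemma IsQMF.ae_summable_pathDensity [IsFiniteMeasure μ] (hqmf : IsQMF r μ m0)
    (hinv : StronglyInvariant r μ) (herg : Ergodic r μ) (hm0 : BddMeasC m0)
    (hne1 : ¬∀ᵐ x ∂μ, ‖m0 x‖ = 1) :
    ∀ᵐ x ∂μ, Summable fun n => pathDensity r m0 n x := by
  have hsq := hqmf.integral_norm_sq hinv hm0
  obtain ⟨hm0_meas, C, hC⟩ := hm0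
  have hm0_memLp : MemLp (fun x => ‖m0 x‖) 2 μ :=
    (MemLp.of_bound hm0_meas.aestronglyMeasurable C (.of_forall hC)).norm
  have hle (x : X) : ‖m0 x‖ ^ 2 ≤ Real.exp (2 * (‖m0 x‖ - 1)) := by
    rw [two_mul, Real.exp_add, ← sq]
    gcongr
    simpa using Real.add_one_le_exp (‖m0 x‖ - 1)
  exact ae_summable_birkhoffProd herg (fun _ => by positivity) hle
    (((hm0_memLp.integrable one_le_two).sub (integrable_const 1)).const_mul 2)
    (integral_mul_sub_one_neg hm0_memLp hsq hne1)

lemma IsQMF.ae_norm_eq_one_of_atom [IsFiniteMeasure μ] [MeasurableSingletonClass X]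
    (hqmf : IsQMF r μ m0) (hinv : StronglyInvariant r μ) (hfin : ∀ x : X, (r ⁻¹' {x}).Finite)
    (herg : Ergodic r μ) {a : X} (ha : μ {a} ≠ 0) : ∀ᵐ x ∂μ, ‖m0 x‖ = 1 := by
  filter_upwards [hinv.ae_natCard_fiber_eq_one hfin herg ha,
    herg.quasiMeasurePreserving.ae hqmf] with x hcard hx
  have hsq : ‖m0 x‖ ^ 2 = 1 :=
    (fiberAvg_apply_of_natCard_eq_one (f := fun y => ‖m0 y‖ ^ 2) hcard).symm.trans hx
  exact (pow_eq_one_iff_of_nonneg (norm_nonneg _) two_ne_zero).1 hsq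

end QMF

theorem shift_not_ergodic_on_solenoid_general
    {X : Type*} [MeasurableSpace X] [MeasurableSpace.CountablySeparated X]
    (r : X → X) (hsurj : Function.Surjective r) (hfin : ∀ x : X, (r ⁻¹' {x}).Finite)
    (μ : Measure X) [IsFiniteMeasure μ] (hinv : StronglyInvariant r μ) (herg : Ergodic r μ)
    (m0 : X → ℂ) (hm0 : BddMeasC m0) (hqmf : IsQMF r μ m0) (hne1 : ¬∀ᵐ x ∂μ, ‖m0 x‖ = 1)
    (ν : Measure (Solenoid r)) (hν : IsPathMeasure r μ m0 ν) :
    ∃ A : Set (Solenoid r), MeasurableSet A ∧ rInf r ⁻¹' A = A ∧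
      0 < ν A ∧ ν A < ν Set.univ := by
  have : NeZero μ := ⟨by rintro rfl; exact hne1 (by simp)⟩
  have := hν.neZero
  have := hν.isFiniteMeasure
  have := MeasurableSpace.measurableSingletonClass_of_countablySeparated (α := X)
  have := hν.sigmaFinite_sum_map_solenoidCoord hinv herg.measurable hsurj hfin hm0
    (hqmf.ae_summable_pathDensity hinv herg hm0 hne1)
  have hcoord := hν.quasiMeasurePreserving_solenoidCoord hinv hsurj hfin
    herg.quasiMeasurePreserving hm0
  refine exists_invariant_of_not_preErgodic fun hshift => hne1 ?_
  obtain ⟨k, a, hka⟩ := exists_measure_preimage_singleton_ne_zero_of_preErgodic hshift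
    (measurable_solenoidCoord herg.measurable) (solenoidCoord_add_one_rInf r)
  exact hqmf.ae_norm_eq_one_of_atom hinv hfin herg
    fun ha => hka ((hcoord k).preimage_null ha)

/-- Under the hypotheses of the main theorem, the shift `r_∞` on the solenoid is **not**
ergodic with respect to the path-space measure `μ_∞`: there is a measurable set `A` which is
invariant up to null sets and has measure strictly between `0` and `μ_∞(X_∞)`. -/
theorem shift_not_ergodic_on_solenoid
    {X : Type*} [MetricSpace X] [CompactSpace X] [MeasurableSpace X] [BorelSpace X]
    (r : X → X) (hr : Measurable r) (hsurj : Function.Surjective r)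
    (hfin : ∀ x : X, (r ⁻¹' {x}).Finite)
    (μ : Measure X) [IsProbabilityMeasure μ] (hinv : StronglyInvariant r μ)
    (herg : Ergodic r μ)
    (m0 : X → ℂ) (hm0 : BddMeasC m0) (hqmf : IsQMF r μ m0)
    (hne1 : ¬ (∀ᵐ x ∂μ, ‖m0 x‖ = 1))
    (hns : μ {x | m0 x = 0} = 0)
    (hlog : Integrable (fun x => Real.log (‖m0 x‖ ^ 2)) μ)
    (ν : Measure (Solenoid r)) (hν : IsPathMeasure r μ m0 ν) :
    ∃ A : Set (Solenoid r), MeasurableSet A ∧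
      ν (symmDiff A (rInf r ⁻¹' A)) = 0 ∧
      0 < ν A ∧ ν A < ν Set.univ := by
  obtain ⟨A, hA, hA_inv, hA_pos, hA_lt⟩ := shift_not_ergodic_on_solenoid_general r hsurj hfin μ
    hinv herg m0 hm0 hqmf hne1 ν hν
  exact ⟨A, hA, by simp [hA_inv], hA_pos, hA_lt⟩
end
end

section
/- Let X be a compact metric space, r : X → X a Borel measurable, onto, finite-to-one map, μ a strongly invariant Borel probability measure with respect to which r is ergodic, and m0 ∈ L∞(X) a QMF filter. If μ has an atom, i.e. there exists z_0 ∈ X with μ({z_0}) > 0, then there exist a point w ∈ X and an integer p ≥ 1 with r^p(w) = w such that the finite cycle C = {w, r(w), …, r^{p-1}(w)} satisfies μ(X ∖ C) = 0, #r⁻¹(x) = 1 for μ-a.e. x ∈ X, and |m0| = 1 μ-a.e. -/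
open MeasureTheory Filter

noncomputable section

/-! An atom returns to itself by Poincaré recurrence, so it is periodic, and its forward orbit `C`
satisfies `C ⊆ r⁻¹ C`; ergodicity then makes `C` conull. Measure preservation gives
`μ {y} ≤ μ {r y}`, so the mass is constant along the cycle, whereas strong invariance tested on the
indicator of `{y}` says `μ {y} = μ {r y} / #r⁻¹(r y)`. Hence the fibres over the cycle are
singletons, and there the QMF identity reduces to `|m0|² = 1`. -/

lemma range_fin_iterate_eq_range_iterate {α : Type*} {f : α → α} {p : ℕ} {x : α} (hp : 0 < p)
    (hx : Function.IsPeriodicPt f p x) :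
    (Set.range fun i : Fin p => f^[(i : ℕ)] x) = Set.range fun n : ℕ => f^[n] x := by
  refine (Set.range_comp_subset_range Fin.val fun n => f^[n] x).antisymm ?_
  rintro _ ⟨n, rfl⟩
  exact ⟨⟨n % p, n.mod_lt hp⟩, hx.iterate_mod_apply n⟩

lemma tsum_preimage_singleton_indicator_one {α β : Type*} (f : α → β) (a : α) (b : β) :
    ∑' x : (f ⁻¹' {b}), ({a} : Set α).indicator (1 : α → ℝ) x =
      ({f a} : Set β).indicator 1 b := by
  classical
  rw [tsum_subtype (f ⁻¹' {b}) (({a} : Set α).indicator (1 : α → ℝ)),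
    tsum_eq_single a fun x hx => by simp [hx]]
  simp [Set.indicator_apply, eq_comm]

section MeasurableDynamics

variable {X : Type*} [MeasurableSpace X] {r : X → X} {μ : Measure X}

section Atoms

variable [MeasurableSingletonClass X] {x : X}

lemma mem_periodicPts_of_measure_singleton_ne_zero (hr : Conservative r μ) (hx : μ {x} ≠ 0) :
    x ∈ Function.periodicPts r := by
  obtain ⟨_, rfl, p, hp, hreturn⟩ :=
    hr.exists_mem_iterate_mem (measurableSet_singleton x).nullMeasurableSet hx
  exact ⟨p, Nat.pos_of_ne_zero hp, hreturn⟩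

lemma measure_singleton_le_measure_singleton_apply (hr : MeasurePreserving r μ μ) (x : X) :
    μ {x} ≤ μ {r x} := by
  rw [← hr.measure_preimage (measurableSet_singleton (r x)).nullMeasurableSet]
  exact measure_mono (Set.singleton_subset_iff.mpr rfl)

lemma measure_singleton_le_measure_singleton_iterate (hr : MeasurePreserving r μ μ) (n : ℕ)
    (x : X) : μ {x} ≤ μ {r^[n] x} :=
  measure_singleton_le_measure_singleton_apply (hr.iterate n) x

lemma exists_apply_eq_and_measure_singleton_eq (hr : MeasurePreserving r μ μ)
    (hx : x ∈ Function.periodicPts r) : ∃ y, r y = x ∧ μ {y} = μ {x} := by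
  obtain ⟨p, hp, hper⟩ := hx
  obtain ⟨q, rfl⟩ := Nat.exists_eq_add_one.mpr hp
  have hlast : r (r^[q] x) = x := by rw [← Function.iterate_succ_apply' r]; exact hper
  refine ⟨r^[q] x, hlast, le_antisymm ?_ ?_⟩
  · simpa only [hlast] using measure_singleton_le_measure_singleton_apply hr (r^[q] x)
  · exact measure_singleton_le_measure_singleton_iterate hr q x

lemma ae_mem_range_iterate_of_measure_singleton_ne_zero [IsFiniteMeasure μ] (hr : Ergodic r μ)
    (hx : μ {x} ≠ 0) : ∀ᵐ y ∂μ, y ∈ Set.range fun n : ℕ => r^[n] x := by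
  set orbit : Set X := Set.range fun n : ℕ => r^[n] x
  have horbit_subset : orbit ⊆ r ⁻¹' orbit := by
    rintro _ ⟨n, rfl⟩
    exact ⟨n + 1, Function.iterate_succ_apply' r n x⟩
  have horbit_meas : MeasurableSet orbit := (Set.countable_range _).measurableSet
  rcases hr.ae_empty_or_univ_of_ae_le_preimage horbit_meas.nullMeasurableSet
    horbit_subset.eventuallyLE with hnull | hconull
  · have hx_mem : x ∈ orbit := ⟨0, rfl⟩
    exact absurd (measure_mono_null (Set.singleton_subset_iff.mpr hx_mem)
      (ae_eq_empty.mp hnull)) hx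
  · exact eventuallyEq_univ.mp hconull

lemma ae_measure_singleton_ne_zero [IsFiniteMeasure μ] (hr : Ergodic r μ) (hx : μ {x} ≠ 0) :
    ∀ᵐ y ∂μ, μ {y} ≠ 0 := by
  filter_upwards [ae_mem_range_iterate_of_measure_singleton_ne_zero hr hx]
  rintro _ ⟨n, rfl⟩
  exact ((pos_iff_ne_zero.mpr hx).trans_le
    (measure_singleton_le_measure_singleton_iterate hr.toMeasurePreserving n x)).ne'

lemma StronglyInvariant.measureReal_singleton (hinv : StronglyInvariant r μ) (x : X) :
    μ.real {x} = (Nat.card (r ⁻¹' {r x}) : ℝ)⁻¹ * μ.real {r x} := by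
  have hfibre : ∀ y, (Nat.card (r ⁻¹' {y}) : ℝ)⁻¹ *
      ∑' z : (r ⁻¹' {y}), ({x} : Set X).indicator (1 : X → ℝ) z =
        ({r x} : Set X).indicator (fun _ => (Nat.card (r ⁻¹' {r x}) : ℝ)⁻¹) y := by
    intro y
    rw [tsum_preimage_singleton_indicator_one]
    by_cases hy : y = r x <;> simp [hy]
  have hbdd : ∃ C, ∀ y, |({x} : Set X).indicator (1 : X → ℝ) y| ≤ C :=
    ⟨1, fun y => by by_cases hy : y = x <;> simp [hy]⟩
  calc μ.real {x} = ∫ y, ({x} : Set X).indicator (1 : X → ℝ) y ∂μ :=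
        (integral_indicator_one (measurableSet_singleton x)).symm
    _ = ∫ y, ({r x} : Set X).indicator (fun _ => (Nat.card (r ⁻¹' {r x}) : ℝ)⁻¹) y ∂μ := by
        rw [hinv _ (measurable_one.indicator (measurableSet_singleton x)) hbdd]
        simp only [hfibre]
    _ = (Nat.card (r ⁻¹' {r x}) : ℝ)⁻¹ * μ.real {r x} := by
        rw [integral_indicator_const _ (measurableSet_singleton _), smul_eq_mul, mul_comm]

lemma StronglyInvariant.card_preimage_singleton_eq_one [IsFiniteMeasure μ]
    (hinv : StronglyInvariant r μ) (hr : MeasurePreserving r μ μ) (hx : μ {x} ≠ 0) :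
    Nat.card (r ⁻¹' {x}) = 1 := by
  obtain ⟨y, rfl, hmass⟩ := exists_apply_eq_and_measure_singleton_eq hr
    (mem_periodicPts_of_measure_singleton_ne_zero hr.conservative hx)
  have hreal_ne : μ.real {r y} ≠ 0 := by rwa [measureReal_ne_zero_iff]
  have hreal_eq : μ.real {y} = μ.real {r y} := congrArg ENNReal.toReal hmass
  rw [hinv.measureReal_singleton y, mul_eq_right₀ hreal_ne, inv_eq_one] at hreal_eq
  exact_mod_cast hreal_eq

end Atoms

lemma IsQMF.ae_norm_eq_one {m0 : X → ℂ} (hqmf : IsQMF r μ m0)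
    (hr : Measure.QuasiMeasurePreserving r μ μ) (hcard : ∀ᵐ x ∂μ, Nat.card (r ⁻¹' {x}) = 1) :
    ∀ᵐ x ∂μ, ‖m0 x‖ = 1 := by
  filter_upwards [hr.ae hqmf, hr.ae hcard] with x hsum hone
  have hsub : Subsingleton (r ⁻¹' {r x}) := (Nat.card_eq_one_iff_unique.mp hone).1
  rw [hone, Nat.cast_one, inv_one, one_mul, tsum_eq_single ⟨x, rfl⟩
    fun y hy => absurd (Subsingleton.elim y _) hy] at hsum
  exact (pow_eq_one_iff_of_nonneg (norm_nonneg _) two_ne_zero).mp hsum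

end MeasurableDynamics

theorem atom_implies_cycle_and_unimodular_general
    {X : Type*} [MeasurableSpace X] [MeasurableSingletonClass X] {r : X → X}
    {μ : Measure X} [IsFiniteMeasure μ] (hinv : StronglyInvariant r μ) (herg : Ergodic r μ)
    {m0 : X → ℂ} (hqmf : IsQMF r μ m0) (hatom : ∃ z₀ : X, 0 < μ {z₀}) :
    ∃ (w : X) (p : ℕ), 1 ≤ p ∧ r^[p] w = w ∧
      μ ((Set.range fun i : Fin p => r^[(i : ℕ)] w)ᶜ) = 0 ∧
      (∀ᵐ x ∂μ, Nat.card (r ⁻¹' {x}) = 1) ∧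
      (∀ᵐ x ∂μ, ‖m0 x‖ = 1) := by
  obtain ⟨w, hw⟩ := hatom
  have hmp : MeasurePreserving r μ μ := herg.toMeasurePreserving
  obtain ⟨p, hp, hper⟩ := mem_periodicPts_of_measure_singleton_ne_zero hmp.conservative hw.ne'
  have hcard : ∀ᵐ x ∂μ, Nat.card (r ⁻¹' {x}) = 1 :=
    (ae_measure_singleton_ne_zero herg hw.ne').mono fun _ hx =>
      hinv.card_preimage_singleton_eq_one hmp hx
  refine ⟨w, p, hp, hper, ?_, hcard, hqmf.ae_norm_eq_one hmp.quasiMeasurePreserving hcard⟩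
  rw [range_fin_iterate_eq_range_iterate hp hper]
  exact ae_mem_range_iterate_of_measure_singleton_ne_zero herg hw.ne'

/-- If `r` is ergodic for the strongly invariant measure `μ`, `m0` is a QMF filter, and `μ` has
an atom, then `μ` is supported on a finite cycle `C = {w, r w, …, r^{p-1} w}` with `r^p w = w`,
`#r⁻¹(x) = 1` for μ-a.e. `x`, and `|m0| = 1` μ-a.e. -/
theorem atom_implies_cycle_and_unimodular
    {X : Type*} [MetricSpace X] [CompactSpace X] [MeasurableSpace X] [BorelSpace X]
    (r : X → X) (hr : Measurable r) (hsurj : Function.Surjective r)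
    (hfin : ∀ x : X, (r ⁻¹' {x}).Finite)
    (μ : Measure X) [IsProbabilityMeasure μ] (hinv : StronglyInvariant r μ)
    (herg : Ergodic r μ)
    (m0 : X → ℂ) (hm0 : BddMeasC m0) (hqmf : IsQMF r μ m0)
    (hatom : ∃ z₀ : X, 0 < μ {z₀}) :
    ∃ (w : X) (p : ℕ), 1 ≤ p ∧ r^[p] w = w ∧
      μ ((Set.range fun i : Fin p => r^[(i : ℕ)] w)ᶜ) = 0 ∧
      (∀ᵐ x ∂μ, Nat.card (r ⁻¹' {x}) = 1) ∧
      (∀ᵐ x ∂μ, ‖m0 x‖ = 1) :=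
  atom_implies_cycle_and_unimodular_general hinv herg hqmf hatom
end
end
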